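/- arXiv:1304.1458 — 7 statements merged into one kernel-verified Lean document; each statement's English description precedes it below -/
import Mathlib

section
/- Let X be a binomial random variable with parameters n and p (0 ≤ p ≤ 1), let μ = n·p, and let φ(x) = (1+x)·ln(1+x) − x. Then for every real t ≥ 0 with μ > 0, P(X ≥ μ + t) ≤ exp(−μ·φ(t/μ)). -/
/-!
This is the exponential Markov inequality with an optimised tilt. Put `μ = n·p`, `x = t/μ` and
`l = log (1 + x) ≥ 0`. The indicator of `k ≥ μ + t` is at most `exp (l·(k - (μ + t)))`, so by the
binomial theorem the tail is at most `exp (-l·(μ + t)) · (1 + p·x)^n`. Finally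
`1 + p·x ≤ exp (p·x)` and `μ + t = μ·(1 + x)` turn this into `exp (-μ·((1 + x)·l - x))`.
-/

open Finset

/-- **Chernoff upper tail for the binomial distribution.**
If `X ~ B(n, p)` with mean `μ = n·p > 0` and `t ≥ 0`, then
`P(X ≥ μ + t) ≤ exp(−μ·φ(t/μ))` where `φ(x) = (1+x)·ln(1+x) − x`.
The probability `P(X ≥ μ + t)` is written explicitly as the sum of the binomial
probabilities `C(n,k)·p^k·(1−p)^(n−k)` over the values `k` with `k ≥ μ + t`. -/
theorem binomial_chernoff_upper (n : ℕ) (p : ℝ) (hp0 : 0 ≤ p) (hp1 : p ≤ 1)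
    (t : ℝ) (ht : 0 ≤ t) (hμ : 0 < (n : ℝ) * p) :
    (∑ k ∈ Finset.range (n + 1),
        if (n : ℝ) * p + t ≤ (k : ℝ) then (n.choose k : ℝ) * p ^ k * (1 - p) ^ (n - k) else 0)
      ≤ Real.exp (-((n : ℝ) * p) *
          ((1 + t / ((n : ℝ) * p)) * Real.log (1 + t / ((n : ℝ) * p)) - t / ((n : ℝ) * p))) := by
  set μ : ℝ := (n : ℝ) * p with hμdef
  set x : ℝ := t / μ with hx
  have hx0 : 0 ≤ x := div_nonneg ht hμ.le
  have htx : t = μ * x := by rw [hx]; field_simp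
  have hpos : 0 < 1 + x := by linarith
  set l : ℝ := Real.log (1 + x) with hl
  have hl0 : 0 ≤ l := Real.log_nonneg (by linarith)
  have hq : 0 ≤ 1 - p := by linarith
  have hexp (k : ℕ) : Real.exp (l * k) = (1 + x) ^ k := by
    rw [mul_comm, Real.exp_nat_mul, hl, Real.exp_log hpos]
  calc
    _ ≤ ∑ k ∈ Finset.range (n + 1),
          (n.choose k : ℝ) * p ^ k * (1 - p) ^ (n - k) * Real.exp (l * (k - (μ + t))) := by
        refine Finset.sum_le_sum fun k _ => ?_
        have hw : 0 ≤ (n.choose k : ℝ) * p ^ k * (1 - p) ^ (n - k) := by positivity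
        split_ifs with h
        · exact le_mul_of_one_le_right hw (Real.one_le_exp (mul_nonneg hl0 (by linarith)))
        · positivity
    _ = Real.exp (-(l * (μ + t))) * (p * (1 + x) + (1 - p)) ^ n := by
        rw [add_pow, Finset.mul_sum]
        refine Finset.sum_congr rfl fun k _ => ?_
        rw [show l * ((k : ℝ) - (μ + t)) = -(l * (μ + t)) + l * k by ring, Real.exp_add, hexp,
          mul_pow]
        ring
    _ ≤ Real.exp (-(l * (μ + t))) * Real.exp (p * x) ^ n := by
        have h1 : 0 ≤ p * (1 + x) + (1 - p) := by positivity
        have h2 : p * (1 + x) + (1 - p) ≤ Real.exp (p * x) := by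
          linarith [Real.add_one_le_exp (p * x)]
        gcongr
    _ = _ := by
        rw [← Real.exp_nat_mul, ← Real.exp_add, htx]
        congr 1
        rw [hμdef]
        ring
end

section
/- Let T ≥ 216 be a real number and let G be a finite simple graph with T₃ triangles, where T₃ ≥ T, such that every edge of G lies in at most T₃^{2/3} triangles. Set p = 6/T^{1/3} and consider the random subgraph H obtained by keeping each edge of G independently with probability p. Let X be the number of triangles of G all three of whose edges are kept. Then the standard deviation of X satisfies √(Var[X]) ≤ 110·(T₃/T)^{5/6}. -/
/-!
For a triangle `t` let `A t` be its set of three edges. Distinct triangles share at most one edge,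
so the problem only concerns a linear family of `n` three-element sets in which every point `e` has
degree `d e ≤ D = n^(2/3)`.

Since the edges are independent, `E[X] = ∑ p ^ |A t|` and `E[X²] = ∑ p ^ |A s ∪ A t|`, hence
`Var X ≤ n p³ + (p⁵ - p⁶) ∑ d e ²`. The trivial estimate `∑ d e ² ≤ 3 n D` is too weak for the
constant `110`. It is improved as follows: with `x = d / D ∈ [0, 1]`, expanding
`(1 - x₁)(1 - x₂)(1 - x₃) ≥ 0` gives `x₁ + x₂ + x₃ ≤ 1 + (x₁x₂ + x₁x₃ + x₂x₃)` on each triangle.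
Any two distinct edges lie in at most one common triangle, so the pair terms sum to at most
`(∑ x) ² / 2 = (3 n / D) ² / 2`. Therefore `∑ d e ² ≤ n D + 9 n² / (2 D)`.

With `s = n^(1/3) ≥ u = T^(1/3)` and `p = 6 / u`, this reads `∑ d e ² ≤ s⁵ (1 + 9 / (2 s))`, and
`(1 - 6 / u) (1 + 9 / (2 s)) ≤ (1 - 6 / s) (1 + 9 / (2 s)) ≤ 1`. So
`Var X ≤ (6 ^ 3 + 6 ^ 5) (s / u) ^ 5 ≤ 110 ^ 2 (s / u) ^ 5`.
-/

open Finset SimpleGraph MeasureTheory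

/-- The Bernoulli measure on `Bool` giving probability `p` to `true`
and `1 - p` to `false`. -/
noncomputable def bernoulliMeasure (p : ℝ) : Measure Bool :=
  ENNReal.ofReal p • Measure.dirac true + ENNReal.ofReal (1 - p) • Measure.dirac false

/-- The product probability space modelling the random subgraph `H` of `G`:
each edge of `G` is kept (`true`) independently with probability `p`. -/
noncomputable def edgeKeepMeasure {V : Type*} [Fintype V] [DecidableEq V]
    (G : SimpleGraph V) [DecidableRel G.Adj] (p : ℝ) :
    Measure ({e // e ∈ G.edgeFinset} → Bool) :=
  Measure.pi fun _ => bernoulliMeasure p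

/-- The number of triangles of `G` all of whose edges are kept in the outcome `ω`. -/
def survivingTriangles {V : Type*} [Fintype V] [DecidableEq V]
    (G : SimpleGraph V) [DecidableRel G.Adj] (ω : {e // e ∈ G.edgeFinset} → Bool) : ℕ :=
  ((G.cliqueFinset 3).filter
    (fun t => ∀ e : {e // e ∈ G.edgeFinset}, (e : Sym2 V) ∈ t.sym2 → ω e = true)).card

/-! ### Moments of the number of fully kept sets -/

lemma isProbabilityMeasure_bernoulliMeasure {p : ℝ} (h0 : 0 ≤ p) (h1 : p ≤ 1) :
    IsProbabilityMeasure (bernoulliMeasure p) := by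
  constructor
  simp only [bernoulliMeasure, Measure.add_apply, Measure.smul_apply, measure_univ, smul_eq_mul,
    mul_one]
  rw [← ENNReal.ofReal_add h0 (by linarith)]
  simp

lemma integral_bernoulliMeasure {p : ℝ} (h0 : 0 ≤ p) (h1 : p ≤ 1) (f : Bool → ℝ) :
    ∫ b, f b ∂(bernoulliMeasure p) = p * f true + (1 - p) * f false := by
  have h1' : 0 ≤ 1 - p := by linarith
  rw [bernoulliMeasure, integral_add_measure, integral_smul_measure, integral_smul_measure,
    integral_dirac, integral_dirac, ENNReal.toReal_ofReal h0, ENNReal.toReal_ofReal h1']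
  · simp
  · exact (integrable_dirac (by simp)).smul_measure (by simp)
  · exact (integrable_dirac (by simp)).smul_measure (by simp)

lemma integral_all_kept {E : Type*} [Fintype E] [DecidableEq E] {p : ℝ}
    (h0 : 0 ≤ p) (h1 : p ≤ 1) (A : Finset E) :
    ∫ ω, (if ∀ e ∈ A, ω e = true then (1 : ℝ) else 0)
      ∂(Measure.pi fun _ : E => bernoulliMeasure p) = p ^ A.card := by
  have := isProbabilityMeasure_bernoulliMeasure h0 h1
  have hprod : ∀ ω : E → Bool, (if ∀ e ∈ A, ω e = true then (1 : ℝ) else 0)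
      = ∏ e, (if e ∈ A then (if ω e = true then (1 : ℝ) else 0) else 1) := by
    intro ω
    rw [Finset.prod_ite_mem, Finset.univ_inter, Finset.prod_boole]
    congr
  simp_rw [hprod]
  rw [integral_fintype_prod_eq_prod
    (f := fun (e : E) (b : Bool) => if e ∈ A then (if b = true then (1 : ℝ) else 0) else 1)]
  have hfac : ∀ e : E, ∫ b, (if e ∈ A then (if b = true then (1 : ℝ) else 0) else 1)
      ∂(bernoulliMeasure p) = if e ∈ A then p else 1 := by
    intro e
    rw [integral_bernoulliMeasure h0 h1]
    split_ifs <;> simp_all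
  simp_rw [hfac]
  rw [Finset.prod_ite_mem, Finset.univ_inter, Finset.prod_const]

/-- The first two moments of the number of members of a family of sets, all of whose points are
kept. -/
lemma moments_kept {E ι : Type*} [Fintype E] [DecidableEq E] {p : ℝ}
    (h0 : 0 ≤ p) (h1 : p ≤ 1) (I : Finset ι) (A : ι → Finset E) (X : (E → Bool) → ℝ)
    (hX : ∀ ω, X ω = ∑ t ∈ I, (if ∀ e ∈ A t, ω e = true then (1 : ℝ) else 0)) :
    (∫ ω, X ω ∂(Measure.pi fun _ : E => bernoulliMeasure p) = ∑ t ∈ I, p ^ (A t).card) ∧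
    (∫ ω, X ω ^ 2 ∂(Measure.pi fun _ : E => bernoulliMeasure p)
      = ∑ s ∈ I, ∑ t ∈ I, p ^ (A s ∪ A t).card) := by
  have := isProbabilityMeasure_bernoulliMeasure h0 h1
  constructor
  · simp_rw [hX]
    rw [integral_finsetSum _ (fun _ _ => Integrable.of_finite)]
    exact Finset.sum_congr rfl fun t _ => integral_all_kept h0 h1 (A t)
  · have hsq : ∀ ω, X ω ^ 2 = ∑ s ∈ I, ∑ t ∈ I,
        (if ∀ e ∈ A s ∪ A t, ω e = true then (1 : ℝ) else 0) := by
      intro ω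
      rw [hX, sq, Finset.sum_mul_sum]
      refine Finset.sum_congr rfl fun s _ => Finset.sum_congr rfl fun t _ => ?_
      simp only [Finset.mem_union, or_imp, forall_and, ite_and]
      split_ifs <;> simp
    simp_rw [hsq]
    rw [integral_finsetSum _ (fun _ _ => Integrable.of_finite)]
    refine Finset.sum_congr rfl fun s _ => ?_
    rw [integral_finsetSum _ (fun _ _ => Integrable.of_finite)]
    exact Finset.sum_congr rfl fun t _ => integral_all_kept h0 h1 _

/-! ### Degrees in linear families of three-element sets -/

lemma sum_sum_mem_eq {E ι : Type*} [Fintype E] [DecidableEq E]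
    (I : Finset ι) (A : ι → Finset E) (f : E → ℝ) :
    ∑ t ∈ I, ∑ e ∈ A t, f e = ∑ e, ((I.filter fun t => e ∈ A t).card : ℝ) * f e := by
  rw [Finset.sum_comm' (t' := Finset.univ) (s' := fun e => I.filter fun t => e ∈ A t) (by simp)]
  simp

lemma sum_card_inter_eq {E ι : Type*} [Fintype E] [DecidableEq E]
    (I : Finset ι) (A : ι → Finset E) :
    ∑ s ∈ I, ∑ t ∈ I, ((A s ∩ A t).card : ℝ)
      = ∑ e, ((I.filter fun t => e ∈ A t).card : ℝ) ^ 2 := by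
  have h : ∀ s ∈ I, ∑ t ∈ I, ((A s ∩ A t).card : ℝ)
      = ∑ e ∈ A s, ((I.filter fun t => e ∈ A t).card : ℝ) := by
    intro s _
    have h2 : ∀ t ∈ I, ((A s ∩ A t).card : ℝ) = ∑ e ∈ A s, if e ∈ A t then (1 : ℝ) else 0 := by
      intro t _
      rw [Finset.sum_boole, Finset.filter_mem_eq_inter]
    rw [Finset.sum_congr rfl h2, Finset.sum_comm]
    simp
  rw [Finset.sum_congr rfl h, sum_sum_mem_eq]
  simp_rw [sq]

/-- In a linear family of `3`-sets with all degrees at most `D`, the sum of the squared degrees is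
at most `n D + 9 n² / (2 D)`, where `n` is the size of the family. -/
lemma sum_degree_sq_le {E ι : Type*} [Fintype E] [DecidableEq E]
    (I : Finset ι) (A : ι → Finset E) (hA : ∀ t ∈ I, (A t).card = 3)
    (hlin : ∀ s ∈ I, ∀ t ∈ I, s ≠ t → (A s ∩ A t).card ≤ 1) {D : ℝ} (hD : 0 < D)
    (hdeg : ∀ e, ((I.filter fun t => e ∈ A t).card : ℝ) ≤ D) :
    ∑ e, ((I.filter fun t => e ∈ A t).card : ℝ) ^ 2
      ≤ I.card * D + 9 * (I.card : ℝ) ^ 2 / (2 * D) := by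
  classical
  have halg : ∀ N : ℝ, D * (N + (3 * N / D) ^ 2 / 2) = N * D + 9 * N ^ 2 / (2 * D) := by
    intro N
    field_simp
    ring
  set x : E → ℝ := fun e => ((I.filter fun t => e ∈ A t).card : ℝ) / D with hx
  have hx0 : ∀ e, 0 ≤ x e := fun e => by positivity
  have hx1 : ∀ e, x e ≤ 1 := fun e => (div_le_one hD).2 (hdeg e)
  have hdx : ∀ e, ((I.filter fun t => e ∈ A t).card : ℝ) = D * x e := by
    intro e
    simp only [hx]
    field_simp
  -- the pointwise inequality `σ₁ ≤ 1 + σ₂`, with `σ₂` written as half the off-diagonal sum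
  have hpt : ∀ t ∈ I, ∑ e ∈ A t, x e
      ≤ 1 + (∑ q ∈ (A t).offDiag, x q.1 * x q.2) / 2 := by
    intro t ht
    have hoff : ∑ q ∈ (A t).offDiag, x q.1 * x q.2
        = (∑ e ∈ A t, x e) ^ 2 - ∑ e ∈ A t, x e ^ 2 := by
      have h := Finset.sum_union (Finset.disjoint_diag_offDiag (A t))
        (f := fun q : E × E => x q.1 * x q.2)
      rw [Finset.diag_union_offDiag, Finset.sum_product, ← Finset.sum_mul_sum,
        Finset.sum_diag] at h
      simp only [sq]
      linarith
    obtain ⟨a, b, c, hab, hac, hbc, h⟩ := Finset.card_eq_three.1 (hA t ht)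
    rw [hoff, h]
    simp only [Finset.sum_insert, Finset.mem_insert, Finset.mem_singleton, hab, hac, hbc,
      Finset.sum_singleton, or_self, not_false_eq_true]
    have h1 : 0 ≤ (1 - x a) * (1 - x b) * (1 - x c) :=
      mul_nonneg (mul_nonneg (sub_nonneg.2 (hx1 a)) (sub_nonneg.2 (hx1 b)))
        (sub_nonneg.2 (hx1 c))
    have h2 : 0 ≤ x a * x b * x c := mul_nonneg (mul_nonneg (hx0 a) (hx0 b)) (hx0 c)
    nlinarith
  -- linearity of the family: the sets of ordered pairs of distinct points are disjoint
  have hdisj : (I : Set ι).PairwiseDisjoint fun t => (A t).offDiag := by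
    intro s hs t ht hst
    rw [Function.onFun, Finset.disjoint_left]
    rintro ⟨e, f⟩ h1 h2
    rw [Finset.mem_offDiag] at h1 h2
    have := Finset.card_le_one.1 (hlin s hs t ht hst) e
      (Finset.mem_inter.2 ⟨h1.1, h2.1⟩) f (Finset.mem_inter.2 ⟨h1.2.1, h2.2.1⟩)
    exact h1.2.2 this
  have hpairs : ∑ t ∈ I, ∑ q ∈ (A t).offDiag, x q.1 * x q.2 ≤ (∑ e, x e) ^ 2 := by
    rw [← Finset.sum_biUnion hdisj, sq, Finset.sum_mul_sum, ← Finset.sum_product']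
    exact Finset.sum_le_sum_of_subset_of_nonneg (fun q _ => by simp)
      fun q _ _ => mul_nonneg (hx0 _) (hx0 _)
  have hsum : D * ∑ e, x e = 3 * I.card := by
    have h := sum_sum_mem_eq I A fun _ => 1
    simp only [mul_one, Finset.sum_const, nsmul_eq_mul] at h
    rw [Finset.sum_congr rfl fun t ht => by rw [hA t ht]] at h
    simp only [hdx, ← Finset.mul_sum, Finset.sum_const, nsmul_eq_mul] at h
    rw [← h]
    push_cast
    ring
  have hsum' : ∑ e, x e = 3 * I.card / D := by
    rw [eq_div_iff hD.ne', mul_comm, hsum]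
  have htot := Finset.sum_le_sum hpt
  rw [Finset.sum_add_distrib, ← Finset.sum_div, sum_sum_mem_eq] at htot
  simp only [Finset.sum_const, nsmul_eq_mul, mul_one, hdx] at htot
  calc ∑ e, ((I.filter fun t => e ∈ A t).card : ℝ) ^ 2
      = D * ∑ e, D * x e * x e := by
        rw [Finset.mul_sum]
        refine Finset.sum_congr rfl fun e _ => ?_
        rw [hdx]
        ring
    _ ≤ D * (I.card + (3 * I.card / D) ^ 2 / 2) := by
        rw [hsum'] at hpairs
        gcongr
        linarith
    _ = I.card * D + 9 * (I.card : ℝ) ^ 2 / (2 * D) := halg _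

/-- The variance of the number of fully kept members of a linear family of `3`-sets, in terms of
the degrees of the points. -/
lemma variance_le_degree {E ι : Type*} [Fintype E] [DecidableEq E] {p : ℝ}
    (h0 : 0 ≤ p) (h1 : p ≤ 1)
    (I : Finset ι) (A : ι → Finset E) (hA : ∀ t ∈ I, (A t).card = 3)
    (hlin : ∀ s ∈ I, ∀ t ∈ I, s ≠ t → (A s ∩ A t).card ≤ 1) :
    ∑ s ∈ I, ∑ t ∈ I, p ^ (A s ∪ A t).card - (∑ t ∈ I, p ^ (A t).card) ^ 2
      ≤ I.card * p ^ 3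
        + (p ^ 5 - p ^ 6) * ∑ e, ((I.filter fun t => e ∈ A t).card : ℝ) ^ 2 := by
  classical
  have h56 : 0 ≤ p ^ 5 - p ^ 6 := by
    have : p ^ 5 - p ^ 6 = p ^ 5 * (1 - p) := by ring
    rw [this]
    exact mul_nonneg (by positivity) (by linarith)
  rw [sq, Finset.sum_mul_sum, ← Finset.sum_sub_distrib, ← sum_card_inter_eq]
  have hpair : ∀ s ∈ I, ∀ t ∈ I, p ^ (A s ∪ A t).card - p ^ (A s).card * p ^ (A t).card
      ≤ (if s = t then p ^ 3 else 0) + (p ^ 5 - p ^ 6) * (A s ∩ A t).card := by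
    intro s hs t ht
    rw [hA s hs, hA t ht]
    by_cases hst : s = t
    · subst hst
      rw [if_pos rfl, Finset.union_self, hA s hs]
      have : 0 ≤ p ^ 3 * p ^ 3 := by positivity
      have : 0 ≤ (p ^ 5 - p ^ 6) * ((A s ∩ A s).card : ℝ) := by positivity
      linarith
    · have hu := Finset.card_union_add_card_inter (A s) (A t)
      rw [hA s hs, hA t ht] at hu
      have hi := hlin s hs t ht hst
      rw [if_neg hst]
      interval_cases hc : (A s ∩ A t).card
      · have : (A s ∪ A t).card = 6 := by omega
        rw [this]
        norm_num
        ring_nf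
        exact le_refl _
      · have : (A s ∪ A t).card = 5 := by omega
        rw [this]
        norm_num
        ring_nf
        exact le_refl _
  calc _ ≤ ∑ s ∈ I, ∑ t ∈ I,
        ((if s = t then p ^ 3 else 0) + (p ^ 5 - p ^ 6) * ((A s ∩ A t).card : ℝ)) := by
        refine Finset.sum_le_sum fun s hs => ?_
        rw [← Finset.sum_sub_distrib]
        exact Finset.sum_le_sum fun t ht => hpair s hs t ht
    _ = _ := by
        simp only [Finset.sum_add_distrib, Finset.mul_sum, Finset.sum_ite_eq]
        simp

/-! ### The edge sets of triangles -/

/-- The edges of `G` spanned by a set `t` of vertices. -/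
def spannedEdges {V : Type*} [Fintype V] [DecidableEq V]
    (G : SimpleGraph V) [DecidableRel G.Adj] (t : Finset V) :
    Finset {e // e ∈ G.edgeFinset} :=
  Finset.univ.filter fun e => (e : Sym2 V) ∈ t.sym2

lemma card_spannedEdges {V : Type*} [Fintype V] [DecidableEq V]
    (G : SimpleGraph V) [DecidableRel G.Adj] {t : Finset V} (ht : t ∈ G.cliqueFinset 3) :
    (spannedEdges G t).card = 3 := by
  rw [mem_cliqueFinset_iff, is3Clique_iff] at ht
  obtain ⟨a, b, c, hab, hac, hbc, rfl⟩ := ht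
  have himg : (spannedEdges G {a, b, c}).map (Function.Embedding.subtype _)
      = {s(a, b), s(a, c), s(b, c)} := by
    ext e
    induction e using Sym2.ind with
    | h u v =>
      simp only [spannedEdges, Finset.mem_map, Finset.mem_filter, Finset.mem_univ, true_and,
        Function.Embedding.coe_subtype, Subtype.exists, exists_and_right, exists_eq_right,
        mem_edgeFinset, mem_edgeSet, Finset.mk_mem_sym2_iff, Finset.mem_insert,
        Finset.mem_singleton, Sym2.eq_iff, exists_prop]
      constructor
      · rintro ⟨h, hu, hv⟩
        have := h.ne
        grind
      · have := hab.symm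
        have := hac.symm
        have := hbc.symm
        rintro ((⟨rfl, rfl⟩ | ⟨rfl, rfl⟩) | (⟨rfl, rfl⟩ | ⟨rfl, rfl⟩) |
          (⟨rfl, rfl⟩ | ⟨rfl, rfl⟩)) <;> simp_all
  rw [← Finset.card_map (Function.Embedding.subtype _), himg]
  have := hab.ne
  have := hac.ne
  have := hbc.ne
  refine Finset.card_eq_three.2 ⟨_, _, _, ?_, ?_, ?_, rfl⟩ <;>
    simp only [ne_eq, Sym2.eq_iff] <;> grind

/-- Two distinct edges have at least three endpoints, so they determine a triangle that contains
them. -/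
lemma card_spannedEdges_inter {V : Type*} [Fintype V] [DecidableEq V]
    (G : SimpleGraph V) [DecidableRel G.Adj] {s t : Finset V} (hs : s ∈ G.cliqueFinset 3)
    (ht : t ∈ G.cliqueFinset 3) (hst : s ≠ t) :
    (spannedEdges G s ∩ spannedEdges G t).card ≤ 1 := by
  have hs3 := (mem_cliqueFinset_iff.1 hs).card_eq
  have ht3 := (mem_cliqueFinset_iff.1 ht).card_eq
  have hi : (s ∩ t).card ≤ 2 := by
    by_contra! h
    have h1 := Finset.eq_of_subset_of_card_le (Finset.inter_subset_left (s₁ := s) (s₂ := t))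
      (by omega)
    have h2 := Finset.eq_of_subset_of_card_le (Finset.inter_subset_right (s₁ := s) (s₂ := t))
      (by omega)
    exact hst (h1.symm.trans h2)
  rw [Finset.card_le_one]
  rintro ⟨e, he⟩ h1 ⟨f, hf⟩ h2
  induction e using Sym2.ind with
  | h a b =>
  induction f using Sym2.ind with
  | h c d =>
  simp only [spannedEdges, Finset.mem_inter, Finset.mem_filter, Finset.mem_univ, true_and,
    Finset.mk_mem_sym2_iff] at h1 h2
  rw [mem_edgeFinset, mem_edgeSet] at he hf
  have hab := he.ne
  have hcd := hf.ne
  have hpair : ({a, b} : Finset V) = s ∩ t :=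
    Finset.eq_of_subset_of_card_le (by grind) (by rw [Finset.card_pair hab]; exact hi)
  have hpair' : ({c, d} : Finset V) = s ∩ t :=
    Finset.eq_of_subset_of_card_le (by grind) (by rw [Finset.card_pair hcd]; exact hi)
  have hc : c ∈ ({a, b} : Finset V) := by rw [hpair, ← hpair']; simp
  have hd : d ∈ ({a, b} : Finset V) := by rw [hpair, ← hpair']; simp
  rw [Subtype.mk.injEq, Sym2.eq_iff]
  simp only [Finset.mem_insert, Finset.mem_singleton] at hc hd
  grind

/-! ### The numerical estimate and the conclusion -/

/-- The final numerical estimate, in terms of the cube roots `s` and `u` of the number of triangles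
and of `T`. -/
lemma numeric_bound {s u : ℝ} (hu : 6 ≤ u) (hus : u ≤ s) :
    s ^ 3 * (6 / u) ^ 3 + ((6 / u) ^ 5 - (6 / u) ^ 6)
        * (s ^ 3 * s ^ 2 + 9 * (s ^ 3) ^ 2 / (2 * s ^ 2))
      ≤ 110 ^ 2 * (s / u) ^ 5 := by
  have hu0 : 0 < u := by linarith
  have hs0 : 0 < s := by linarith
  have hr : 1 ≤ s / u := (one_le_div hu0).2 hus
  have h35 : (s / u) ^ 3 ≤ (s / u) ^ 5 := pow_le_pow_right₀ hr (by norm_num)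
  have hfac : (1 - 6 / u) * (1 + 9 / (2 * s)) ≤ 1 := by
    calc (1 - 6 / u) * (1 + 9 / (2 * s)) ≤ (1 - 6 / s) * (1 + 9 / (2 * s)) := by gcongr
      _ = 1 - (3 / (2 * s) + 27 / s ^ 2) := by
        field_simp
        ring
      _ ≤ 1 := by
        have : 0 ≤ 3 / (2 * s) + 27 / s ^ 2 := by positivity
        linarith
  have heq : s ^ 3 * (6 / u) ^ 3 + ((6 / u) ^ 5 - (6 / u) ^ 6)
        * (s ^ 3 * s ^ 2 + 9 * (s ^ 3) ^ 2 / (2 * s ^ 2))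
      = 216 * (s / u) ^ 3 + 7776 * (s / u) ^ 5 * ((1 - 6 / u) * (1 + 9 / (2 * s))) := by
    field_simp
    ring
  rw [heq]
  have h5 : 0 ≤ (s / u) ^ 5 := by positivity
  nlinarith [mul_le_mul_of_nonneg_left hfac h5]

/-- **variance bound, no large towers.** Let `T ≥ 216`, let `G` have
`T₃ ≥ T` triangles, and suppose every edge of `G` lies in at most `T₃^(2/3)` triangles.
Keeping each edge independently with probability `p = 6 / T^(1/3)`, the standard
deviation of the number `X` of surviving triangles satisfies
`√(Var X) ≤ 110 · (T₃ / T)^(5/6)`. -/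
theorem stddev_surviving_triangles_le {V : Type*} [Fintype V] [DecidableEq V]
    (G : SimpleGraph V) [DecidableRel G.Adj] (T : ℝ) (hT : 216 ≤ T)
    (hT₃ : T ≤ ((G.cliqueFinset 3).card : ℝ))
    (hTower : ∀ e ∈ G.edgeFinset,
      (((G.cliqueFinset 3).filter (fun t => e ∈ t.sym2)).card : ℝ)
        ≤ ((G.cliqueFinset 3).card : ℝ) ^ ((2 : ℝ) / 3))
    (p : ℝ) (hp : p = 6 / T ^ ((1 : ℝ) / 3)) :
    Real.sqrt
        ((∫ ω, (survivingTriangles G ω : ℝ) ^ 2 ∂(edgeKeepMeasure G p))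
          - (∫ ω, (survivingTriangles G ω : ℝ) ∂(edgeKeepMeasure G p)) ^ 2)
      ≤ 110 * (((G.cliqueFinset 3).card : ℝ) / T) ^ ((5 : ℝ) / 6) := by
  set n : ℝ := ((G.cliqueFinset 3).card : ℝ) with hn
  have hT0 : 0 ≤ T := by linarith
  have hn0 : 0 ≤ n := by linarith
  set u : ℝ := T ^ ((1 : ℝ) / 3) with hu
  set s : ℝ := n ^ ((1 : ℝ) / 3) with hs
  have hu3 : T = u ^ 3 := by
    rw [hu, ← Real.rpow_natCast, ← Real.rpow_mul hT0]
    norm_num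
  have hs3 : n = s ^ 3 := by
    rw [hs, ← Real.rpow_natCast, ← Real.rpow_mul hn0]
    norm_num
  have hs2 : n ^ ((2 : ℝ) / 3) = s ^ 2 := by
    rw [hs, ← Real.rpow_natCast, ← Real.rpow_mul hn0]
    norm_num
  have hu0 : 0 ≤ u := Real.rpow_nonneg hT0 _
  have hu6 : 6 ≤ u := by
    refine le_of_pow_le_pow_left₀ (n := 3) (by norm_num) hu0 ?_
    rw [← hu3]
    linarith
  have hus : u ≤ s := Real.rpow_le_rpow hT0 hT₃ (by norm_num)
  have hspos : 0 < s := by linarith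
  have hupos : 0 < u := by linarith
  have hp0 : 0 ≤ p := by rw [hp]; positivity
  have hp1 : p ≤ 1 := by rw [hp]; exact (div_le_one hupos).2 hu6
  have hrhs : 0 ≤ 110 * (n / T) ^ ((5 : ℝ) / 6) :=
    mul_nonneg (by norm_num) (Real.rpow_nonneg (div_nonneg hn0 hT0) _)
  have hsu0 : 0 ≤ s / u := div_nonneg hspos.le hupos.le
  have hrhs2 : (110 * (n / T) ^ ((5 : ℝ) / 6)) ^ 2 = 110 ^ 2 * (s / u) ^ 5 := by
    rw [mul_pow, hs3, hu3, ← div_pow, ← Real.rpow_natCast (s / u) 3,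
      ← Real.rpow_mul hsu0, ← Real.rpow_natCast (_ ^ (_ : ℝ)) 2,
      ← Real.rpow_mul hsu0, ← Real.rpow_natCast (s / u) 5]
    norm_num
  have hA : ∀ t ∈ G.cliqueFinset 3, (spannedEdges G t).card = 3 :=
    fun t ht => card_spannedEdges G ht
  have hlin : ∀ s ∈ G.cliqueFinset 3, ∀ t ∈ G.cliqueFinset 3, s ≠ t →
      (spannedEdges G s ∩ spannedEdges G t).card ≤ 1 :=
    fun s hs t ht hst => card_spannedEdges_inter G hs ht hst
  obtain ⟨hm1, hm2⟩ := moments_kept hp0 hp1 (G.cliqueFinset 3) (spannedEdges G)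
    (fun ω => (survivingTriangles G ω : ℝ)) (by
      intro ω
      simp [survivingTriangles, spannedEdges])
  have hvar := variance_le_degree hp0 hp1 (G.cliqueFinset 3) (spannedEdges G) hA hlin
  have hdeg := sum_degree_sq_le (G.cliqueFinset 3) (spannedEdges G) hA hlin
    (D := s ^ 2) (pow_pos hspos 2) (by
      rintro ⟨e, he⟩
      rw [← hs2]
      simpa [spannedEdges] using hTower e he)
  have h56 : 0 ≤ p ^ 5 - p ^ 6 :=
    sub_nonneg.2 (pow_le_pow_of_le_one hp0 hp1 (by norm_num))
  refine Real.sqrt_le_iff.2 ⟨hrhs, ?_⟩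
  rw [hrhs2, edgeKeepMeasure, hm1, hm2]
  refine hvar.trans (le_trans ?_ (numeric_bound hu6 hus))
  rw [← hn, hs3] at hdeg ⊢
  rw [← hp]
  gcongr
end

section
/- Let T ≥ 216 be a real number and let G be a finite simple graph with T₃ triangles, where T₃ ≥ T, such that every edge of G lies in at most T₃^{2/3} triangles. Set p = 6/T^{1/3} and consider the random subgraph H obtained by keeping each edge of G independently with probability p. Then the probability that no triangle of G has all three of its edges kept in H is at most 0.26. -/
/-!
Let `X` be the number of surviving triangles, `N` the number of triangles of `G`, `a = N^(1/3)`,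
and `d e` the number of triangles through the edge `e`. The proof is a second-moment argument in
the Cauchy-Schwarz form: if `E[X²] ≤ 1.35 (E X)²`, then integrating
`1[X = 0] ≤ (1 - X / (1.35 E X))²` gives `P(X = 0) ≤ 1 - 1 / 1.35 < 0.26`.

Two distinct triangles share at most one edge. Hence, with `Q = ∑ d e ^ 2` (the number of triples
`(t, t', e)` such that `e` lies in both triangles `t` and `t'`),
`E[X²] ≤ N² p⁶ + Q (p⁵ - p⁶) + N p³` (`sum_pow_union_le`), while `E X = N p³`. As `a p ≥ 6`, it
suffices to show `Q (1 - p) ≤ 2 a⁵`.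

* If `a ≤ 18`, then `1 - p ≤ 2/3`, and the trivial bound `Q ≤ a² ∑ d e = 3 a⁵` is enough.
* If `a ≥ 18`, the trivial bound is too weak, but few edges can have large degree: two distinct
  edges lie in at most one common triangle, so Bonferroni's inequality gives
  `∑_{e ∈ H} d e ≤ N + |H| (|H| - 1) / 2` for every set `H` of edges (`bonferroni`). Applied to the
  edges with `d e > 0.3 a²`, this yields `Q ≤ 1.9 a⁵` (`sum_sq_le`).

Only the structure of a linear 3-uniform hypergraph (3-element blocks, any two of which share at
most one point) is used: the points are the edges of `G`, and the blocks are the edge sets of its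
triangles.
-/

open Finset SimpleGraph MeasureTheory

/-! ### Degrees in linear 3-uniform hypergraphs -/

/-- The degree of the point `e` in the hypergraph with blocks `B t`, `t ∈ F`, as a real number. -/
def hdeg {ι E : Type*} [DecidableEq E] (F : Finset ι) (B : ι → Finset E) (e : E) : ℝ :=
  ((F.filter (fun t => e ∈ B t)).card : ℝ)

lemma hdeg_nonneg {ι E : Type*} [DecidableEq E] (F : Finset ι) (B : ι → Finset E) (e : E) :
    0 ≤ hdeg F B e := Nat.cast_nonneg _

lemma hdeg_eq_sum {ι E : Type*} [DecidableEq E] (F : Finset ι) (B : ι → Finset E) (e : E) :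
    hdeg F B e = ∑ t ∈ F, if e ∈ B t then (1 : ℝ) else 0 := by
  simp [hdeg]

lemma sum_hdeg {ι E : Type*} [DecidableEq E] (F : Finset ι) (B : ι → Finset E) (H : Finset E) :
    ∑ e ∈ H, hdeg F B e = ∑ t ∈ F, ((H ∩ B t).card : ℝ) := by
  simp_rw [hdeg_eq_sum]
  rw [Finset.sum_comm]
  refine Finset.sum_congr rfl fun t _ => ?_
  rw [Finset.sum_boole, Finset.filter_mem_eq_inter]

lemma sum_hdeg_univ {ι E : Type*} [DecidableEq E] [Fintype E] (F : Finset ι) (B : ι → Finset E)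
    (h3 : ∀ t ∈ F, (B t).card = 3) :
    ∑ e, hdeg F B e = 3 * F.card := by
  rw [sum_hdeg, Finset.sum_congr rfl (g := fun _ => (3 : ℝ))]
  · simp [mul_comm]
  · intro t ht
    simp [h3 t ht]

/-- Double count of the triples `(t, t', e)` with `e ∈ B t ∩ B t'`. -/
lemma sum_hdeg_sq {ι E : Type*} [DecidableEq E] [Fintype E] (F : Finset ι) (B : ι → Finset E) :
    ∑ t ∈ F, ∑ t' ∈ F, ((B t ∩ B t').card : ℝ) = ∑ e, hdeg F B e ^ 2 := by
  have h : ∀ t t', ((B t ∩ B t').card : ℝ)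
      = ∑ e, (if e ∈ B t then (1 : ℝ) else 0) * (if e ∈ B t' then (1 : ℝ) else 0) := by
    intro t t'
    simp [← ite_and, ← Finset.mem_inter, Finset.inter_comm]
  simp_rw [h, hdeg_eq_sum, sq, Finset.sum_mul_sum]
  rw [Finset.sum_comm (s := Finset.univ)]
  refine Finset.sum_congr rfl fun t _ => ?_
  rw [Finset.sum_comm]

/-- Bonferroni's inequality for the sets of blocks through the points of `H`: any two of these sets
have at most one block in common. -/
lemma bonferroni {ι E : Type*} [DecidableEq E] (F : Finset ι) (B : ι → Finset E)
    (hlin : ∀ t ∈ F, ∀ t' ∈ F, t ≠ t' → (B t ∩ B t').card ≤ 1) (H : Finset E) :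
    2 * ∑ e ∈ H, hdeg F B e ≤ 2 * F.card + (H.card : ℝ) * (H.card - 1) := by
  have hoff : ∀ A : Finset E, (A.offDiag.card : ℝ) = A.card * (A.card - 1) := by
    intro A
    rw [Finset.offDiag_card, Nat.cast_sub (Nat.le_mul_self _)]
    push_cast
    ring
  have hpair : ∑ t ∈ F, ((H ∩ B t).offDiag.card : ℝ) ≤ H.offDiag.card := by
    have h1 : ∀ t ∈ F, ((H ∩ B t).offDiag.card : ℝ)
        = ∑ x ∈ H.offDiag, if x.1 ∈ B t ∧ x.2 ∈ B t then (1 : ℝ) else 0 := by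
      intro t _
      rw [Finset.sum_boole]
      congr 2
      ext ⟨x, y⟩
      simp only [Finset.mem_offDiag, Finset.mem_inter, Finset.mem_filter]
      tauto
    rw [Finset.sum_congr rfl h1, Finset.sum_comm]
    calc _ ≤ ∑ x ∈ H.offDiag, (1 : ℝ) := by
          refine Finset.sum_le_sum fun x hx => ?_
          rw [Finset.sum_boole]
          norm_cast
          rw [Finset.card_le_one]
          intro t ht t' ht'
          rw [Finset.mem_filter] at ht ht'
          by_contra hne
          have := Finset.card_le_one.mp (hlin t ht.1 t' ht'.1 hne) x.1
            (Finset.mem_inter.mpr ⟨ht.2.1, ht'.2.1⟩) x.2 (Finset.mem_inter.mpr ⟨ht.2.2, ht'.2.2⟩)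
          exact (Finset.mem_offDiag.mp hx).2.2 this
      _ = _ := by simp
  -- For a natural number `x`, the inequality `2 x ≤ 2 + x (x - 1)` is `(x - 1) (x - 2) ≥ 0`.
  have hx : ∀ t ∈ F, 2 * ((H ∩ B t).card : ℝ) ≤ 2 + ((H ∩ B t).offDiag.card : ℝ) := by
    intro t _
    rw [hoff]
    generalize (H ∩ B t).card = x
    rcases x with _ | _ | x
    · simp
    · simp
    · push_cast
      nlinarith [(Nat.cast_nonneg x : (0 : ℝ) ≤ x)]
  rw [sum_hdeg, Finset.mul_sum]
  have := Finset.sum_le_sum hx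
  rw [Finset.sum_add_distrib] at this
  simp only [Finset.sum_const, nsmul_eq_mul] at this
  rw [hoff] at hpair
  linarith

/-- Degree-square bound with a threshold `k`: points of degree at most `k` contribute at most
`3 k N` in total. By `hk2`, at most `3 N / k ≤ 2 k` points have larger degree, so by `bonferroni`
their excesses over `k` sum to at most `N`. -/
lemma sum_sq_le {ι E : Type*} [DecidableEq E] [Fintype E] (F : Finset ι) (B : ι → Finset E)
    (h3 : ∀ t ∈ F, (B t).card = 3)
    (hlin : ∀ t ∈ F, ∀ t' ∈ F, t ≠ t' → (B t ∩ B t').card ≤ 1)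
    (M k : ℝ) (hM : ∀ e, hdeg F B e ≤ M) (hM0 : 0 ≤ M) (hk : 0 < k)
    (hk2 : 3 * (F.card : ℝ) ≤ 2 * k ^ 2) :
    ∑ e, hdeg F B e ^ 2 ≤ 3 * k * F.card + M * F.card := by
  classical
  set H : Finset E := Finset.univ.filter (fun e => k < hdeg F B e) with hH
  have hsum := sum_hdeg_univ F B h3
  have hHle : ∑ e ∈ H, hdeg F B e ≤ 3 * F.card := by
    rw [← hsum]
    exact Finset.sum_le_sum_of_subset_of_nonneg (Finset.subset_univ _)
      fun e _ _ => hdeg_nonneg F B e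
  have hcard : (H.card : ℝ) * k ≤ 3 * F.card := by
    refine le_trans ?_ hHle
    rw [← nsmul_eq_mul]
    exact Finset.card_nsmul_le_sum _ _ _ fun e he => (Finset.mem_filter.mp he).2.le
  have hh : (H.card : ℝ) ≤ 2 * k := by
    by_contra hcon
    push Not at hcon
    nlinarith
  have hex : ∑ e ∈ H, (hdeg F B e - k) ≤ F.card := by
    rw [Finset.sum_sub_distrib]
    simp only [Finset.sum_const, nsmul_eq_mul]
    have := bonferroni F B hlin H
    nlinarith [(Nat.cast_nonneg H.card : (0 : ℝ) ≤ H.card)]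
  have hpt : ∀ e, hdeg F B e ^ 2
      ≤ k * hdeg F B e + M * (if k < hdeg F B e then hdeg F B e - k else 0) := by
    intro e
    have h0 := hdeg_nonneg F B e
    split_ifs with h
    · nlinarith [mul_le_mul_of_nonneg_right (hM e) (sub_nonneg.mpr h.le)]
    · nlinarith
  calc _ ≤ ∑ e, (k * hdeg F B e + M * (if k < hdeg F B e then hdeg F B e - k else 0)) :=
        Finset.sum_le_sum fun e _ => hpt e
    _ = k * (3 * F.card) + M * ∑ e ∈ H, (hdeg F B e - k) := by
        rw [Finset.sum_add_distrib, ← Finset.mul_sum, ← Finset.mul_sum, hsum, hH,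
          Finset.sum_filter]
    _ ≤ _ := by nlinarith [mul_le_mul_of_nonneg_left hex hM0]

/-! ### The second moment -/

/-- The left-hand side is the second moment of the number of surviving blocks. -/
lemma sum_pow_union_le {ι E : Type*} [DecidableEq ι] [DecidableEq E] [Fintype E]
    (F : Finset ι) (B : ι → Finset E)
    (h3 : ∀ t ∈ F, (B t).card = 3)
    (hlin : ∀ t ∈ F, ∀ t' ∈ F, t ≠ t' → (B t ∩ B t').card ≤ 1)
    (p : ℝ) (hp0 : 0 ≤ p) (hp1 : p ≤ 1) :
    ∑ t ∈ F, ∑ t' ∈ F, p ^ (B t ∪ B t').card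
      ≤ (F.card : ℝ) ^ 2 * p ^ 6 + (∑ e, hdeg F B e ^ 2) * (p ^ 5 - p ^ 6) + F.card * p ^ 3 := by
  have h65 : p ^ 6 ≤ p ^ 5 := pow_le_pow_of_le_one hp0 hp1 (by norm_num)
  have hpt : ∀ t ∈ F, ∀ t' ∈ F, p ^ (B t ∪ B t').card
      ≤ p ^ 6 + ((B t ∩ B t').card : ℝ) * (p ^ 5 - p ^ 6) + (if t = t' then p ^ 3 else 0) := by
    intro t ht t' ht'
    split_ifs with h
    · subst h
      simp only [Finset.union_self, Finset.inter_self, h3 t ht]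
      have : 0 ≤ p ^ 6 := by positivity
      push_cast
      linarith
    · have hc := Finset.card_union_add_card_inter (B t) (B t')
      rw [h3 t ht, h3 t' ht'] at hc
      have h1 := hlin t ht t' ht' h
      rcases (by omega : (B t ∩ B t').card = 0 ∨ (B t ∩ B t').card = 1) with h0 | h0
      · rw [h0, show (B t ∪ B t').card = 6 by omega]
        simp
      · rw [h0, show (B t ∪ B t').card = 5 by omega]
        simp
  refine (Finset.sum_le_sum fun t ht => Finset.sum_le_sum fun t' ht' => hpt t ht t' ht').trans ?_
  simp only [Finset.sum_add_distrib, ← Finset.sum_mul, sum_hdeg_sq]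
  refine le_of_eq ?_
  simp
  ring

/-- The numerical core: `E[X²] ≤ 1.35 (E X)²`, for `a = N^(1/3)`. -/
lemma second_moment_numeric {ι E : Type*} [DecidableEq ι] [DecidableEq E] [Fintype E]
    (F : Finset ι) (B : ι → Finset E)
    (h3 : ∀ t ∈ F, (B t).card = 3)
    (hlin : ∀ t ∈ F, ∀ t' ∈ F, t ≠ t' → (B t ∩ B t').card ≤ 1)
    (p a : ℝ) (hp1 : p ≤ 1) (ha : 0 < a) (hN : (F.card : ℝ) = a ^ 3)
    (hM : ∀ e, hdeg F B e ≤ a ^ 2) (hap : 6 ≤ a * p) :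
    ∑ t ∈ F, ∑ t' ∈ F, p ^ (B t ∪ B t').card ≤ 1.35 * ((F.card : ℝ) * p ^ 3) ^ 2 := by
  have hp0 : 0 < p := by
    by_contra h
    push Not at h
    nlinarith
  have hQ : (∑ e, hdeg F B e ^ 2) * (1 - p) ≤ 2 * a ^ 5 := by
    have ha5 : 0 < a ^ 5 := by positivity
    rcases le_total a 18 with h18 | h18
    · have hQ3 : ∑ e, hdeg F B e ^ 2 ≤ 3 * a ^ 5 := by
        calc _ ≤ ∑ e, a ^ 2 * hdeg F B e := by
              refine Finset.sum_le_sum fun e _ => ?_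
              rw [sq (hdeg F B e)]
              exact mul_le_mul_of_nonneg_right (hM e) (hdeg_nonneg F B e)
          _ = _ := by
              rw [← Finset.mul_sum, sum_hdeg_univ F B h3, hN]
              ring
      have hp3 : 1 - p ≤ 2 / 3 := by nlinarith
      calc _ ≤ 3 * a ^ 5 * (1 - p) := mul_le_mul_of_nonneg_right hQ3 (by linarith)
        _ ≤ 3 * a ^ 5 * (2 / 3) := mul_le_mul_of_nonneg_left hp3 (by positivity)
        _ = _ := by ring
    · have hQ2 := sum_sq_le F B h3 hlin (a ^ 2) (0.3 * a ^ 2) hM (by positivity) (by positivity)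
        (by
          rw [hN]
          nlinarith [mul_le_mul_of_nonneg_right h18 (by positivity : (0 : ℝ) ≤ a ^ 3)])
      rw [hN] at hQ2
      have hQ0 : 0 ≤ ∑ e, hdeg F B e ^ 2 := Finset.sum_nonneg fun e _ => sq_nonneg _
      nlinarith [mul_nonneg hQ0 hp0.le]
  refine (sum_pow_union_le F B h3 hlin p hp0.le hp1).trans ?_
  rw [hN]
  set Q := ∑ e, hdeg F B e ^ 2
  have h1 : Q * (p ^ 5 - p ^ 6) ≤ 2 * (a * p) ^ 5 := by
    have := mul_le_mul_of_nonneg_right hQ (by positivity : (0 : ℝ) ≤ p ^ 5)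
    nlinarith
  have h2 : a ^ 3 * p ^ 3 = (a * p) ^ 3 := by ring
  have h3' : (a ^ 3) ^ 2 * p ^ 6 = (a * p) ^ 6 := by ring
  rw [h2, h3']
  set y := a * p
  have hy5 : 6 * y ^ 5 ≤ y ^ 6 := by
    have := mul_le_mul_of_nonneg_right hap (by positivity : (0 : ℝ) ≤ y ^ 5)
    linarith [(by ring : y * y ^ 5 = y ^ 6)]
  have hy3 : 216 * y ^ 3 ≤ y ^ 6 := by
    have h216 : (6 : ℝ) ^ 3 ≤ y ^ 3 := pow_le_pow_left₀ (by norm_num) hap 3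
    have := mul_le_mul_of_nonneg_right h216 (by positivity : (0 : ℝ) ≤ y ^ 3)
    linarith [(by ring : y ^ 3 * y ^ 3 = y ^ 6)]
  have hy6 : 0 ≤ y ^ 6 := by positivity
  rw [show (y ^ 3) ^ 2 = y ^ 6 by ring]
  linarith

/-! ### Random subsets of the points -/

lemma isProbabilityMeasure_bernoulliMeasure_s10 (p : ℝ) (hp0 : 0 ≤ p) (hp1 : p ≤ 1) :
    IsProbabilityMeasure (bernoulliMeasure p) := by
  constructor
  simp [bernoulliMeasure, ← ENNReal.ofReal_add hp0 (sub_nonneg.mpr hp1)]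

lemma pi_bernoulli_real {E : Type*} [Fintype E] (p : ℝ) (hp0 : 0 ≤ p) (hp1 : p ≤ 1)
    (A : Finset E) :
    (Measure.pi fun _ : E => bernoulliMeasure p).real {ω | ∀ e ∈ A, ω e = true}
      = p ^ A.card := by
  classical
  have := isProbabilityMeasure_bernoulliMeasure_s10 p hp0 hp1
  have hset : {ω : E → Bool | ∀ e ∈ A, ω e = true}
      = Set.pi Set.univ (fun e => if e ∈ A then {true} else Set.univ) := by
    ext ω
    simp only [Set.mem_ofPred_eq, Set.mem_pi, Set.mem_univ, true_imp_iff]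
    refine forall_congr' fun e => ?_
    by_cases h : e ∈ A <;> simp [h]
  have hone : ∀ e, bernoulliMeasure p (if e ∈ A then {true} else Set.univ)
      = if e ∈ A then ENNReal.ofReal p else 1 := by
    intro e
    by_cases h : e ∈ A
    · simp [h, bernoulliMeasure]
    · rw [if_neg h, if_neg h, measure_univ]
  rw [measureReal_def, hset, Measure.pi_pi, Finset.prod_congr rfl fun e _ => hone e]
  simp [Finset.prod_ite_mem, ENNReal.toReal_ofReal hp0]

/-- The second-moment method for block survival, from `E[X²] ≤ 1.35 (E X)²`. -/
lemma prob_no_block_le {ι E : Type*} [DecidableEq E] [Fintype E]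
    (F : Finset ι) (B : ι → Finset E) (h3 : ∀ t ∈ F, (B t).card = 3)
    (p : ℝ) (hp0 : 0 < p) (hp1 : p ≤ 1) (hF : F.Nonempty)
    (hsec : ∑ t ∈ F, ∑ t' ∈ F, p ^ (B t ∪ B t').card ≤ 1.35 * ((F.card : ℝ) * p ^ 3) ^ 2) :
    (Measure.pi fun _ : E => bernoulliMeasure p) {ω | ∀ t ∈ F, ¬ ∀ e ∈ B t, ω e = true}
      ≤ ENNReal.ofReal 0.26 := by
  classical
  have := isProbabilityMeasure_bernoulliMeasure_s10 p hp0.le hp1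
  set P := Measure.pi fun _ : E => bernoulliMeasure p with hP
  set I : Finset E → (E → Bool) → ℝ :=
    fun A => Set.indicator {ω | ∀ e ∈ A, ω e = true} 1 with hI
  have hint : ∀ f : (E → Bool) → ℝ, Integrable f P := fun f => Integrable.of_finite
  have hIint : ∀ A, ∫ ω, I A ω ∂P = p ^ A.card := by
    intro A
    rw [hI, integral_indicator_one (Set.toFinite _).measurableSet, hP,
      pi_bernoulli_real p hp0.le hp1]
  have hImul : ∀ A A' ω, I A ω * I A' ω = I (A ∪ A') ω := by
    intro A A' ω
    simp only [hI, Set.indicator_apply, Set.mem_ofPred_eq, Pi.one_apply, Finset.mem_union]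
    rw [ite_zero_mul_ite_zero, mul_one]
    refine if_congr ?_ rfl rfl
    constructor
    · rintro ⟨h, h'⟩ e (he | he)
      exacts [h e he, h' e he]
    · exact fun h => ⟨fun e he => h e (Or.inl he), fun e he => h e (Or.inr he)⟩
  set X : (E → Bool) → ℝ := fun ω => ∑ t ∈ F, I (B t) ω with hX
  have hEX : ∫ ω, X ω ∂P = F.card * p ^ 3 := by
    rw [hX, integral_finsetSum _ fun t _ => hint _]
    simp_rw [hIint]
    rw [Finset.sum_congr rfl fun t ht => by rw [h3 t ht]]
    simp
  have hEX2 : ∫ ω, X ω ^ 2 ∂P = ∑ t ∈ F, ∑ t' ∈ F, p ^ (B t ∪ B t').card := by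
    simp_rw [hX, sq, Finset.sum_mul_sum, hImul]
    rw [integral_finsetSum _ fun t _ => hint _]
    refine Finset.sum_congr rfl fun t _ => ?_
    rw [integral_finsetSum _ fun t _ => hint _]
    simp_rw [hIint]
  set m : ℝ := F.card * p ^ 3 with hm
  have hm0 : 0 < m := by
    have : (0 : ℝ) < F.card := by exact_mod_cast hF.card_pos
    positivity
  set S : Set (E → Bool) := {ω | ∀ t ∈ F, ¬ ∀ e ∈ B t, ω e = true} with hS
  -- `c = 1 / (1.35 m)` minimises the resulting bound `1 - 2 c m + 1.35 (c m)²`.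
  set c : ℝ := 1 / (1.35 * m) with hc
  have hcm : c * m = 1 / 1.35 := by
    rw [hc]
    field_simp
  have hpt : ∀ ω, S.indicator (1 : (E → Bool) → ℝ) ω ≤ 1 - 2 * c * X ω + c ^ 2 * X ω ^ 2 := by
    intro ω
    by_cases hω : ω ∈ S
    · have hX0 : X ω = 0 := Finset.sum_eq_zero fun t ht => by
        simpa [hI] using hω t ht
      simp [hω, hX0]
    · rw [Set.indicator_of_notMem hω]
      nlinarith [sq_nonneg (1 - c * X ω)]
  have hreal : P.real S ≤ 0.26 := by
    rw [← integral_indicator_one (Set.toFinite S).measurableSet]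
    calc _ ≤ ∫ ω, (1 - 2 * c * X ω + c ^ 2 * X ω ^ 2) ∂P :=
          integral_mono (hint _) (hint _) hpt
      _ = 1 - 2 * c * m + c ^ 2 * ∫ ω, X ω ^ 2 ∂P := by
          rw [integral_add (hint _) (hint _), integral_sub (hint _) (hint _),
            integral_const_mul, integral_const_mul, hEX]
          simp
      _ ≤ 1 - 2 * c * m + c ^ 2 * (1.35 * m ^ 2) := by
          rw [hEX2]
          gcongr
      _ = 1 - 2 * (c * m) + 1.35 * (c * m) ^ 2 := by ring
      _ ≤ 0.26 := by
          rw [hcm]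
          norm_num
  rw [← ofReal_measureReal]
  exact ENNReal.ofReal_le_ofReal hreal

/-! ### Triangles of a graph as a linear hypergraph -/

/-- The edge set of the triangle `t`, in the type of edges of `G`. -/
def triEdges {V : Type*} [Fintype V] [DecidableEq V] (G : SimpleGraph V) [DecidableRel G.Adj]
    (t : Finset V) : Finset {e // e ∈ G.edgeFinset} :=
  Finset.univ.filter (fun e => (e : Sym2 V) ∈ t.sym2)

lemma card_triEdges {V : Type*} [Fintype V] [DecidableEq V] (G : SimpleGraph V)
    [DecidableRel G.Adj] (t : Finset V) (ht : t ∈ G.cliqueFinset 3) :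
    (triEdges G t).card = 3 := by
  rw [mem_cliqueFinset_iff, is3Clique_iff] at ht
  obtain ⟨a, b, c, hab, hac, hbc, rfl⟩ := ht
  have h : (triEdges G {a, b, c}).map (Function.Embedding.subtype _)
      = {s(a, b), s(a, c), s(b, c)} := by
    ext e
    induction e with | _ x y
    simp only [triEdges, Finset.mem_map, Finset.mem_filter, Finset.mem_univ, true_and,
      Function.Embedding.subtype_apply, Subtype.exists, exists_and_right, exists_eq_right,
      mem_edgeFinset, mem_edgeSet, Finset.mk_mem_sym2_iff, Finset.mem_insert,
      Finset.mem_singleton, Sym2.eq_iff]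
    constructor
    · rintro ⟨⟨h, hx⟩, hy⟩
      rcases hx with rfl | rfl | rfl <;> rcases hy with rfl | rfl | rfl <;> simp_all
    · rintro ((⟨rfl, rfl⟩ | ⟨rfl, rfl⟩) | (⟨rfl, rfl⟩ | ⟨rfl, rfl⟩) | (⟨rfl, rfl⟩ | ⟨rfl, rfl⟩)) <;>
        simp_all [G.adj_comm]
  rw [← Finset.card_map (Function.Embedding.subtype _), h, Finset.card_eq_three]
  have h1 := hab.ne
  have h2 := hac.ne
  have h3 := hbc.ne
  refine ⟨_, _, _, ?_, ?_, ?_, rfl⟩ <;> simp only [ne_eq, Sym2.eq_iff] <;> grind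

/-- Both endpoints of a shared edge lie in `t ∩ t'`, which has at most two elements. -/
lemma card_triEdges_inter {V : Type*} [Fintype V] [DecidableEq V] (G : SimpleGraph V)
    [DecidableRel G.Adj] (t : Finset V) (ht : t ∈ G.cliqueFinset 3) (t' : Finset V)
    (ht' : t' ∈ G.cliqueFinset 3) (hne : t ≠ t') :
    (triEdges G t ∩ triEdges G t').card ≤ 1 := by
  rw [mem_cliqueFinset_iff] at ht ht'
  have hc : (t ∩ t').card ≤ 2 := by
    by_contra hcon
    have h1 : t ∩ t' = t :=
      Finset.eq_of_subset_of_card_le Finset.inter_subset_left (by rw [ht.card_eq]; omega)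
    have h2 : t ∩ t' = t' :=
      Finset.eq_of_subset_of_card_le Finset.inter_subset_right (by rw [ht'.card_eq]; omega)
    exact hne (h1.symm.trans h2)
  have key : ∀ e ∈ triEdges G t ∩ triEdges G t', (e : Sym2 V).toFinset = t ∩ t' := by
    rintro ⟨e, he⟩ hmem
    simp only [triEdges, Finset.mem_inter, Finset.mem_filter, Finset.mem_univ, true_and,
      Finset.mem_sym2_iff] at hmem
    refine Finset.eq_of_subset_of_card_le (fun v hv => ?_) ?_
    · rw [Sym2.mem_toFinset] at hv
      exact Finset.mem_inter.mpr ⟨hmem.1 v hv, hmem.2 v hv⟩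
    · rw [Sym2.card_toFinset_of_not_isDiag _ (G.not_isDiag_of_mem_edgeFinset he)]
      exact hc
  rw [Finset.card_le_one]
  intro e he f hf
  have h := (key e he).trans (key f hf).symm
  refine Subtype.ext (Sym2.ext fun v => ?_)
  rw [← Sym2.mem_toFinset, h, Sym2.mem_toFinset]

/-- Let `T ≥ 216`, let `G` have `T₃ ≥ T` triangles, and suppose every
edge of `G` lies in at most `T₃^(2/3)` triangles. Keeping each edge independently with
probability `p = 6 / T^(1/3)`, the probability that no triangle of `G` has all three of
its edges kept is at most `0.26`. -/
theorem prob_no_surviving_triangle_le {V : Type*} [Fintype V] [DecidableEq V]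
    (G : SimpleGraph V) [DecidableRel G.Adj] (T : ℝ) (hT : 216 ≤ T)
    (hT₃ : T ≤ ((G.cliqueFinset 3).card : ℝ))
    (hTower : ∀ e ∈ G.edgeFinset,
      (((G.cliqueFinset 3).filter (fun t => e ∈ t.sym2)).card : ℝ)
        ≤ ((G.cliqueFinset 3).card : ℝ) ^ ((2 : ℝ) / 3))
    (p : ℝ) (hp : p = 6 / T ^ ((1 : ℝ) / 3)) :
    edgeKeepMeasure G p
        {ω | ∀ t ∈ G.cliqueFinset 3,
          ¬ ∀ e : {e // e ∈ G.edgeFinset}, (e : Sym2 V) ∈ t.sym2 → ω e = true}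
      ≤ ENNReal.ofReal 0.26 := by
  set N : ℝ := ((G.cliqueFinset 3).card : ℝ) with hN
  have hN0 : 0 < N := by linarith
  set a : ℝ := N ^ ((1 : ℝ) / 3) with ha
  have ha0 : 0 < a := Real.rpow_pos_of_pos hN0 _
  have ha3 : N = a ^ 3 := by
    rw [ha, ← Real.rpow_natCast, ← Real.rpow_mul hN0.le]
    norm_num
  have ha2 : N ^ ((2 : ℝ) / 3) = a ^ 2 := by
    rw [ha, ← Real.rpow_natCast, ← Real.rpow_mul hN0.le]
    norm_num
  have hτ6 : 6 ≤ T ^ ((1 : ℝ) / 3) := by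
    have h6 : (6 : ℝ) = 216 ^ ((1 : ℝ) / 3) := by
      rw [show (216 : ℝ) = 6 ^ (3 : ℝ) by norm_num, ← Real.rpow_mul (by norm_num)]
      norm_num
    rw [h6]
    exact Real.rpow_le_rpow (by norm_num) hT (by norm_num)
  have hτa : T ^ ((1 : ℝ) / 3) ≤ a := Real.rpow_le_rpow (by linarith) hT₃ (by norm_num)
  have hτ0 : 0 < T ^ ((1 : ℝ) / 3) := by linarith
  have hp0 : 0 < p := by
    rw [hp]
    positivity
  have hp1 : p ≤ 1 := by
    rw [hp, div_le_one hτ0]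
    exact hτ6
  have hap : 6 ≤ a * p := by
    rw [hp, ← mul_div_assoc, le_div_iff₀ hτ0]
    linarith
  have hF : (G.cliqueFinset 3).Nonempty := by
    rw [← Finset.card_pos, ← Nat.cast_pos (α := ℝ)]
    exact hN0
  have hM : ∀ e, hdeg (G.cliqueFinset 3) (triEdges G) e ≤ a ^ 2 := by
    intro e
    rw [← ha2]
    simpa [hdeg, triEdges] using hTower e e.2
  have hsec := second_moment_numeric (G.cliqueFinset 3) (triEdges G) (card_triEdges G)
    (card_triEdges_inter G) p a hp1 ha0 ha3 hM hap
  have := prob_no_block_le (G.cliqueFinset 3) (triEdges G) (card_triEdges G) p hp0 hp1 hF hsec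
  simpa only [edgeKeepMeasure, triEdges, Finset.mem_filter, Finset.mem_univ, true_and] using this
end

section
/- Fix n ≥ 1 and Boolean matrices x, y : Fin n × Fin n → Bool. Let G* be the simple graph on vertex set A ∪ B ∪ C, where A, B, C are three disjoint copies of Fin n with vertices aᵢ, bₖ, cᵢ, and whose edges are exactly: aᵢ ~ bₖ iff x(i,k) = 1; cᵢ ~ bₖ iff y(i,k) = 1; and aᵢ ~ cᵢ for every i (a perfect matching between A and C). Then the triangles of G* are exactly the vertex sets {aᵢ, bₖ, cᵢ} with x(i,k) = 1 and y(i,k) = 1; in particular every triangle of G* contains exactly one matching edge (aᵢ, cᵢ). -/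
/-!
`G*` is tripartite with parts `A`, `B`, `C`, so a triangle has one vertex in each part. Its
`A`–`C` edge is a matching edge, which forces its vertices to be `aᵢ, bₖ, cᵢ` with a common index
`i`; the other two edges then say `x (i, k)` and `y (i, k)`. Such a set has a single vertex in `A`,
hence a single matching edge.
-/

open Finset SimpleGraph

/-- The base (Boolean) edge relation of the graph `G* = G(x, y)` from the paper's
reduction from set disjointness: `aᵢ ~ bₖ` iff `x (i,k)`, `cᵢ ~ bₖ` iff `y (i,k)`,
and `aᵢ ~ cᵢ` (a perfect matching between `A` and `C`). Here `A` is the first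
summand, `B` the second and `C` the third. -/
def gstarRel (n : ℕ) (x y : Fin n × Fin n → Bool) :
    (Fin n ⊕ Fin n ⊕ Fin n) → (Fin n ⊕ Fin n ⊕ Fin n) → Bool
  | Sum.inl i, Sum.inr (Sum.inl k) => x (i, k)
  | Sum.inr (Sum.inr i), Sum.inr (Sum.inl k) => y (i, k)
  | Sum.inl i, Sum.inr (Sum.inr j) => decide (i = j)
  | _, _ => false

/-- The graph `G* = G(x, y)`: the symmetric irreflexive closure of `gstarRel`. -/
def gstar (n : ℕ) (x y : Fin n × Fin n → Bool) : SimpleGraph (Fin n ⊕ Fin n ⊕ Fin n) :=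
  SimpleGraph.fromRel (fun u v => gstarRel n x y u v = true)

instance (n : ℕ) (x y : Fin n × Fin n → Bool) : DecidableRel (gstar n x y).Adj :=
  fun u v => decidable_of_iff' _ (SimpleGraph.fromRel_adj _ u v)

/-- The triangles of `G* = G(x, y)` are exactly the vertex sets
`{aᵢ, bₖ, cᵢ}` with `x (i,k) = 1` and `y (i,k) = 1`; in particular every triangle of `G*`
contains exactly one matching edge `(aᵢ, cᵢ)`. -/
theorem gstar_triangles (n : ℕ) (hn : 1 ≤ n) (x y : Fin n × Fin n → Bool) :
    (∀ t : Finset (Fin n ⊕ Fin n ⊕ Fin n),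
      t ∈ (gstar n x y).cliqueFinset 3 ↔
        ∃ i k : Fin n, x (i, k) = true ∧ y (i, k) = true ∧
          t = {Sum.inl i, Sum.inr (Sum.inl k), Sum.inr (Sum.inr i)}) ∧
    (∀ t ∈ (gstar n x y).cliqueFinset 3,
      ∃! i : Fin n, Sum.inl i ∈ t ∧ Sum.inr (Sum.inr i) ∈ t) := by
  have key : ∀ t : Finset (Fin n ⊕ Fin n ⊕ Fin n),
      t ∈ (gstar n x y).cliqueFinset 3 ↔
        ∃ i k : Fin n, x (i, k) = true ∧ y (i, k) = true ∧
          t = {Sum.inl i, Sum.inr (Sum.inl k), Sum.inr (Sum.inr i)} := by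
    intro t
    rw [SimpleGraph.mem_cliqueFinset_iff, SimpleGraph.is3Clique_iff]
    constructor
    · rintro ⟨u, v, w, huv, huw, hvw, rfl⟩
      -- Adjacency within a single part is absurd, so the three vertices lie one in each part;
      -- the six surviving cases are the orders in which the parts can occur.
      rcases u with i | k | j <;> rcases v with i' | k' | j' <;> rcases w with i'' | k'' | j'' <;>
        simp [gstar, gstarRel] at huv huw hvw <;> subst_vars
      · exact ⟨_, _, huv, hvw, rfl⟩
      · exact ⟨_, _, huw, hvw, by ext; simp; tauto⟩
      · exact ⟨_, _, huv, huw, by ext; simp; tauto⟩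
      · exact ⟨_, _, huw, huv, by ext; simp; tauto⟩
      · exact ⟨_, _, hvw, huw, by ext; simp; tauto⟩
      · exact ⟨_, _, hvw, huv, by ext; simp; tauto⟩
    · rintro ⟨i, k, hx, hy, rfl⟩
      exact ⟨_, _, _, by simp [gstar, gstarRel, hx], by simp [gstar, gstarRel],
        by simp [gstar, gstarRel, hy], rfl⟩
  refine ⟨key, fun t ht => ?_⟩
  obtain ⟨i, k, -, -, rfl⟩ := (key t).1 ht
  exact ⟨i, by simp, fun j hj => by simpa using hj.1⟩
end

section
/- Fix n ≥ 1 and Boolean matrices x, y : Fin n × Fin n → Bool. Let G* be the simple graph on vertex set A ∪ B ∪ C, where A, B, C are three disjoint copies of Fin n with vertices aᵢ, bₖ, cᵢ, and whose edges are exactly: aᵢ ~ bₖ iff x(i,k) = 1; cᵢ ~ bₖ iff y(i,k) = 1; and aᵢ ~ cᵢ for every i. Then the number of triangles of G* equals the number of pairs (i,k) ∈ Fin n × Fin n with x(i,k) = 1 and y(i,k) = 1 (i.e., the size of the intersection of the sets with characteristic vectors x and y). -/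
/-!
Each of the parts `A`, `B`, `C` is independent, so a triangle has exactly one vertex in each of
them; since `A` and `C` are joined only by the matching `aᵢ ~ cᵢ`, it has the form
`{aᵢ, bₖ, cᵢ}`. That set is a triangle iff `x (i, k)` and `y (i, k)` both hold, and it determines
`(i, k)`, so `(i, k) ↦ {aᵢ, bₖ, cᵢ}` is the required bijection.
-/

open Finset SimpleGraph

/-- The candidate triangle `{aᵢ, bₖ, cᵢ}` attached to the pair `(i, k)`. -/
def gstarTriple {n : ℕ} (ik : Fin n × Fin n) : Finset (Fin n ⊕ Fin n ⊕ Fin n) :=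
  {Sum.inl ik.1, Sum.inr (Sum.inl ik.2), Sum.inr (Sum.inr ik.1)}

/-- The triple `{aᵢ, bₖ, cᵢ}` determines `(i, k)`: its members in `A` and `B` are `aᵢ` and `bₖ`. -/
theorem gstarTriple_injective {n : ℕ} : Function.Injective (gstarTriple (n := n)) := by
  rintro ⟨i, k⟩ ⟨i', k'⟩ h
  have ha := Finset.ext_iff.mp h (Sum.inl i)
  have hb := Finset.ext_iff.mp h (Sum.inr (Sum.inl k))
  simp [gstarTriple] at ha hb
  simp [ha, hb]

/-- The `A`–`C` edges being a matching, every triangle is one of the triples `{aᵢ, bₖ, cᵢ}`. -/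
theorem gstar_isNClique_three_iff {n : ℕ} (x y : Fin n × Fin n → Bool)
    (s : Finset (Fin n ⊕ Fin n ⊕ Fin n)) :
    (gstar n x y).IsNClique 3 s ↔
      ∃ ik, (x ik = true ∧ y ik = true) ∧ gstarTriple ik = s := by
  constructor
  · intro hs
    obtain ⟨u, v, w, huv, huw, hvw, rfl⟩ := SimpleGraph.is3Clique_iff.mp hs
    -- Only the six bijective assignments of `u, v, w` to `A`, `B`, `C` survive adjacency.
    rcases u with i | i | i <;> rcases v with j | j | j <;> rcases w with k | k | k <;>
      simp [gstar, gstarRel] at huv huw hvw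
    all_goals subst_vars
    · exact ⟨(_, _), ⟨huv, hvw⟩, by ext; simp [gstarTriple]⟩
    · exact ⟨(_, _), ⟨huw, hvw⟩, by ext; simp [gstarTriple]; tauto⟩
    · exact ⟨(_, _), ⟨huv, huw⟩, by ext; simp [gstarTriple]; tauto⟩
    · exact ⟨(_, _), ⟨huw, huv⟩, by ext; simp [gstarTriple]; tauto⟩
    · exact ⟨(_, _), ⟨hvw, huw⟩, by ext; simp [gstarTriple]; tauto⟩
    · exact ⟨(_, _), ⟨hvw, huv⟩, by ext; simp [gstarTriple]; tauto⟩
  · rintro ⟨⟨i, k⟩, ⟨hx, hy⟩, rfl⟩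
    rw [gstarTriple, SimpleGraph.is3Clique_triple_iff]
    simp [gstar, gstarRel, hx, hy]

/-- The number of triangles of `G* = G(x, y)` equals the number of
pairs `(i, k)` with `x (i,k) = 1` and `y (i,k) = 1`, i.e. the size of the intersection of
the sets with characteristic vectors `x` and `y`. -/
theorem gstar_triangle_count (n : ℕ) (hn : 1 ≤ n) (x y : Fin n × Fin n → Bool) :
    ((gstar n x y).cliqueFinset 3).card =
      ((Finset.univ : Finset (Fin n × Fin n)).filter
        (fun ik => x ik = true ∧ y ik = true)).card := by
  rw [← Finset.card_image_of_injective _ gstarTriple_injective]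
  congr 1
  ext s
  simp only [SimpleGraph.mem_cliqueFinset_iff, Finset.mem_image, Finset.mem_filter,
    Finset.mem_univ, true_and]
  exact gstar_isNClique_three_iff x y s
end

section
/- Fix natural numbers a, f, T ≥ 1, a Boolean matrix x : Fin a × Fin f → Bool, and indices i₀ ∈ Fin a, j₀ ∈ Fin f. Let G be the simple graph on the disjoint union X ∪ Y ∪ Z of Fin a, Fin f, Fin T, with vertices xᵢ ∈ X, yⱼ ∈ Y, z_r ∈ Z, whose edges are exactly: xᵢ ~ yⱼ iff x(i,j) = 1; z_r ~ x_{i₀} for every r; and z_r ~ y_{j₀} for every r. Then the number of triangles of G equals T if x(i₀,j₀) = 1, and equals 0 otherwise. -/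
/-!
The graph `gIndex` is tripartite: no edge joins two vertices of the same part, so a triangle has
exactly one vertex in each of `X`, `Y`, `Z`. Its `Z`-vertex `z_r` is adjacent only to `x_{i₀}` and
`y_{j₀}`, so the triangle is `{x_{i₀}, y_{j₀}, z_r}`, and this set is a triangle exactly when
`x (i₀, j₀) = 1`. Distinct `r` give distinct triangles, hence the count `T` or `0`.
-/

open Finset SimpleGraph

/-- The base (Boolean) edge relation of the graph `G = G(x, ℓ)` with `ℓ = (i₀, j₀)`
from the paper's reduction from the index problem: `xᵢ ~ yⱼ` iff `x (i, j)`,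
`z_r ~ x_{i₀}` for every `r`, and `z_r ~ y_{j₀}` for every `r`. Here `X = Fin a` is the
first summand, `Y = Fin f` the second and `Z = Fin T` the third. -/
def gIndexRel (a f T : ℕ) (x : Fin a × Fin f → Bool) (i₀ : Fin a) (j₀ : Fin f) :
    (Fin a ⊕ Fin f ⊕ Fin T) → (Fin a ⊕ Fin f ⊕ Fin T) → Bool
  | Sum.inl i, Sum.inr (Sum.inl j) => x (i, j)
  | Sum.inr (Sum.inr _), Sum.inl i => decide (i = i₀)
  | Sum.inr (Sum.inr _), Sum.inr (Sum.inl j) => decide (j = j₀)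
  | _, _ => false

/-- The graph `G = G(x, ℓ)`: the symmetric irreflexive closure of `gIndexRel`. -/
def gIndex (a f T : ℕ) (x : Fin a × Fin f → Bool) (i₀ : Fin a) (j₀ : Fin f) :
    SimpleGraph (Fin a ⊕ Fin f ⊕ Fin T) :=
  SimpleGraph.fromRel (fun u v => gIndexRel a f T x i₀ j₀ u v = true)

instance (a f T : ℕ) (x : Fin a × Fin f → Bool) (i₀ : Fin a) (j₀ : Fin f) :
    DecidableRel (gIndex a f T x i₀ j₀).Adj :=
  fun u v => decidable_of_iff' _ (SimpleGraph.fromRel_adj _ u v)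

/-- The only possible triangles of `gIndex` are the sets `{x_{i₀}, y_{j₀}, z_r}`, and these are
triangles exactly when `x (i₀, j₀) = 1`. -/
lemma mem_cliqueFinset_gIndex_iff (a f T : ℕ) (x : Fin a × Fin f → Bool) (i₀ : Fin a) (j₀ : Fin f)
    (s : Finset (Fin a ⊕ Fin f ⊕ Fin T)) :
    s ∈ (gIndex a f T x i₀ j₀).cliqueFinset 3 ↔
      x (i₀, j₀) = true ∧
        ∃ r : Fin T, s = {Sum.inl i₀, Sum.inr (Sum.inl j₀), Sum.inr (Sum.inr r)} := by
  rw [SimpleGraph.mem_cliqueFinset_iff, SimpleGraph.is3Clique_iff]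
  constructor
  · rintro ⟨u, v, w, huv, huw, hvw, rfl⟩
    simp only [gIndex, SimpleGraph.fromRel_adj] at huv huw hvw
    -- Splitting by parts leaves only the six orderings of one vertex from each part.
    rcases u with i | j | r <;> rcases v with i' | j' | r' <;> rcases w with i'' | j'' | r'' <;>
      simp [gIndexRel] at huv huw hvw <;> subst_vars <;>
      refine ⟨by assumption, by assumption, ?_⟩ <;> ext y <;>
      simp only [Finset.mem_insert, Finset.mem_singleton] <;> tauto
  · rintro ⟨hx, r, rfl⟩
    exact ⟨_, _, _, by simp [gIndex, gIndexRel, hx], by simp [gIndex, gIndexRel],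
      by simp [gIndex, gIndexRel], rfl⟩

/-- The number of triangles of the graph `G = G(x, ℓ)` of the index
reduction equals `T` if `x (i₀, j₀) = 1` and equals `0` otherwise. -/
theorem gIndex_triangle_count (a f T : ℕ) (ha : 1 ≤ a) (hf : 1 ≤ f) (hT : 1 ≤ T)
    (x : Fin a × Fin f → Bool) (i₀ : Fin a) (j₀ : Fin f) :
    ((gIndex a f T x i₀ j₀).cliqueFinset 3).card =
      if x (i₀, j₀) = true then T else 0 := by
  split_ifs with hx
  · have himage : (gIndex a f T x i₀ j₀).cliqueFinset 3 =
        (Finset.univ : Finset (Fin T)).image fun r =>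
          {Sum.inl i₀, Sum.inr (Sum.inl j₀), Sum.inr (Sum.inr r)} := by
      ext s
      simp [-SimpleGraph.mem_cliqueFinset_iff, mem_cliqueFinset_gIndex_iff, hx, eq_comm]
    rw [himage, Finset.card_image_of_injective, Finset.card_univ, Fintype.card_fin]
    intro r r' h
    dsimp only at h
    have hr : (Sum.inr (Sum.inr r) : Fin a ⊕ Fin f ⊕ Fin T) ∈
        ({Sum.inl i₀, Sum.inr (Sum.inl j₀), Sum.inr (Sum.inr r')} : Finset _) := by
      rw [← h]
      simp
    simpa using hr
  · rw [Finset.card_eq_zero, Finset.eq_empty_iff_forall_notMem]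
    intro s hs
    exact hx ((mem_cliqueFinset_gIndex_iff a f T x i₀ j₀ s).1 hs).1
end

section
/- Let n ≥ 1, z ≤ n, and k be natural numbers. Then C(n − z, k) / C(n, k) ≤ (1 − z/n)^k as real numbers, where C(·,·) denotes the binomial coefficient (with the convention C(a,b) = 0 when b > a). -/
/-!
With `m = n - z`, the ratio of binomial coefficients is `∏_{i<k} (m - i)/(n - i)`, and each factor
is at most `m/n` because `m ≤ n`. The cross-multiplied inequality is proved over `ℕ` for falling
factorials (`descFactorial_mul_pow_le`); dividing by `k!` gives binomial coefficients.
-/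

/-- Truncated subtraction does no harm here: once `k > m` the left-hand side vanishes. -/
theorem descFactorial_mul_pow_le {m n : ℕ} (h : m ≤ n) (k : ℕ) :
    m.descFactorial k * n ^ k ≤ m ^ k * n.descFactorial k := by
  induction k with
  | zero => simp
  | succ k ih =>
    have key : (m - k) * n ≤ m * (n - k) := by
      rw [Nat.sub_mul, Nat.mul_sub, Nat.mul_comm m k]
      exact Nat.sub_le_sub_left (Nat.mul_le_mul_left k h) _
    rw [Nat.descFactorial_succ, Nat.descFactorial_succ, pow_succ, pow_succ]
    calc (m - k) * m.descFactorial k * (n ^ k * n)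
        = ((m - k) * n) * (m.descFactorial k * n ^ k) := by ring
      _ ≤ (m * (n - k)) * (m ^ k * n.descFactorial k) := Nat.mul_le_mul key ih
      _ = m ^ k * m * ((n - k) * n.descFactorial k) := by ring

theorem choose_mul_pow_le {m n : ℕ} (h : m ≤ n) (k : ℕ) :
    m.choose k * n ^ k ≤ m ^ k * n.choose k := by
  have := descFactorial_mul_pow_le h k
  rw [Nat.descFactorial_eq_factorial_mul_choose, Nat.descFactorial_eq_factorial_mul_choose] at this
  refine Nat.le_of_mul_le_mul_left ?_ k.factorial_pos
  linarith

/-- **sampling without replacement avoids a fixed set.**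
For `n ≥ 1`, `z ≤ n` and any `k`, the probability `C(n−z, k) / C(n, k)` that a uniformly
random `k`-element subset of an `n`-element set avoids a fixed `z`-element subset is
at most `(1 − z/n)^k`. -/
theorem choose_ratio_le_pow (n z k : ℕ) (hn : 1 ≤ n) (hz : z ≤ n) :
    ((n - z).choose k : ℝ) / (n.choose k : ℝ) ≤ (1 - (z : ℝ) / (n : ℝ)) ^ k := by
  have hn0 : (0 : ℝ) < n := by exact_mod_cast hn
  have e : 1 - (z : ℝ) / n = ((n - z : ℕ) : ℝ) / n := by
    rw [Nat.cast_sub hz]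
    field_simp
  rw [e, div_pow]
  -- For `k > n` the denominator `C(n, k)` is zero and the quotient takes the value `0`.
  rcases Nat.eq_zero_or_pos (n.choose k) with h0 | h0
  · rw [h0, Nat.cast_zero, div_zero]
    positivity
  · rw [div_le_div_iff₀ (by exact_mod_cast h0) (by positivity)]
    exact_mod_cast choose_mul_pow_le (Nat.sub_le n z) k
end
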